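/- Let θ ∈ (0,1) and let {U_{𝔾_n}}_{n≥0} be the sequence produced by the adaptive planewave algorithm for the source system: 𝔾_0 = ∅, U_{𝔾_0} = 0; at each step one chooses a symmetric set δ𝔾_n ⊂ ℤ^d \ 𝔾_n with η̄(U_{𝔾_n}; δ𝔾_n) ≥ θ η̄(U_{𝔾_n}), sets 𝔾_{n+1} = 𝔾_n ∪ δ𝔾_n, and lets U_{𝔾_{n+1}} ∈ (V_{𝔾_{n+1}})^N be the Galerkin solution. Then with ρ = ρ(θ) = √(1 − (α_*/α^*) θ²) ∈ (0,1), one has ‖U − U_{𝔾_{n+1}}‖_a ≤ ρ ‖U − U_{𝔾_n}‖_a for all n. -/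

import Mathlib

/-!
The contraction combines three facts about the energy form `a`.

* Reliability (`reliability`): `α_* ‖U - U_n‖_a² ≤ η̄(U_n)²`, because `a(U - U_n, ·)` is the
  duality pairing with the residual and `α_* ‖·‖²_{H¹} ≤ ‖·‖_a²`.
* Discrete efficiency (`discrete_efficiency`): `η̄(U_n; δ𝔾_n)² ≤ α^* ‖U_{n+1} - U_n‖_a²`, by
  testing the Galerkin equation on `𝔾_{n+1}` with the Riesz representative of the residual
  restricted to `δ𝔾_n`. That function is real because `δ𝔾_n` is symmetric, and it lies in
  `V_{𝔾_{n+1}}`; no inverse estimate is needed, since the planewaves are orthogonal in `H¹`.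
* Galerkin orthogonality (`pythagoras`):
  `‖U - U_n‖_a² = ‖U - U_{n+1}‖_a² + ‖U_{n+1} - U_n‖_a²`.

With the marking condition `θ η̄(U_n) ≤ η̄(U_n; δ𝔾_n)` they give
`‖U_{n+1} - U_n‖_a² ≥ (α_*/α^*) θ² ‖U - U_n‖_a²`, hence the claim.

The analytic input is that all series converge. Since `σ > d/2`, the coefficients of `V` are
absolutely summable (`summable_norm_of_memHs`), so convolution with `V` maps `ℓ²` to `ℓ²`
(`summable_mulCoeff_sq`) and is Hermitian (`l2inner_mulCoeff_symm`). Consequently `L` maps `H¹`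
into `H^{-1}`, the form `a` is a Hermitian form on `H¹`, and `a(u, v) = ⟨Lu, v⟩`.
-/


/-!
Common setup: periodic functions on `Ω = [0,2π)^d` are represented by their Fourier
coefficients `u : (Fin d → ℤ) → ℂ` with respect to the orthonormal basis
`e_G(x) = (2π)^{-d/2} e^{iG·x}` of `L_p^2(Ω)`.
-/

open scoped BigOperators Pointwise Classical

noncomputable section

namespace APW

/-- Frequency indices `G ∈ ℤ^d`. -/
abbrev Idx (d : ℕ) := Fin d → ℤ

/-- A periodic function/distribution, represented by its Fourier coefficients
`û_G = (e_G, u)`. -/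
abbrev Coeff (d : ℕ) := Idx d → ℂ

variable {d : ℕ}

/-- `|G|²`, the squared Euclidean norm of a frequency `G ∈ ℤ^d`. -/
def gnormSq (G : Idx d) : ℝ := ∑ i, ((G i : ℝ)) ^ 2

/-- Squared `H_p^s(Ω)` norm: `Σ_G (1+|G|²)^s |û_G|²`. -/
def hsNormSq (s : ℝ) (u : Coeff d) : ℝ := ∑' G, (1 + gnormSq G) ^ s * ‖u G‖ ^ 2

/-- `H_p^s(Ω)` norm. -/
def hsNorm (s : ℝ) (u : Coeff d) : ℝ := Real.sqrt (hsNormSq s u)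

/-- Membership in `H_p^s(Ω)` (real-valued periodic functions:
`û_{-G} = (û_G)^*` and the weighted coefficient series is summable). -/
def memHs (s : ℝ) (u : Coeff d) : Prop :=
  Summable (fun G : Idx d => (1 + gnormSq G) ^ s * ‖u G‖ ^ 2) ∧
    ∀ G, u (-G) = starRingEnd ℂ (u G)

/-- The `L_p²(Ω)` inner product `(u,v) = Σ_G û_G^* v̂_G`. -/
def l2inner (u v : Coeff d) : ℂ := ∑' G, starRingEnd ℂ (u G) * v G

/-- Squared `L²` norm. -/
def l2NormSq (u : Coeff d) : ℝ := ∑' G, ‖u G‖ ^ 2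

/-- `L²` norm. -/
def l2Norm (u : Coeff d) : ℝ := Real.sqrt (l2NormSq u)

/-- The `L²`-orthogonal projection `Π_𝔾` onto `V_𝔾` (truncation of Fourier coefficients). -/
def proj (𝔾 : Set (Idx d)) (u : Coeff d) : Coeff d := fun G => if G ∈ 𝔾 then u G else 0

/-- The index set `𝔾^M = {G ∈ ℤ^d : |G| ≤ M}`. -/
def ball (d : ℕ) (M : ℝ) : Set (Idx d) := {G | Real.sqrt (gnormSq G) ≤ M}

/-- `V_𝔾 = span{e_G : G ∈ 𝔾}`: coefficient sequences supported in `𝔾`. -/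
def pwSpace (𝔾 : Set (Idx d)) : Set (Coeff d) := {u | ∀ G, G ∉ 𝔾 → u G = 0}

/-- Fourier coefficients of the pointwise product `V·u` (a convolution). -/
def mulCoeff (V u : Coeff d) : Coeff d :=
  fun G => ((Real.sqrt ((2 * Real.pi) ^ d))⁻¹ : ℝ) * ∑' G', V (G - G') * u G'

/-- The bilinear form `a(u,v) = (∇u,∇v) + (Vu,v)`, in Fourier coefficients. -/
def aForm (V u v : Coeff d) : ℂ :=
  (∑' G, (gnormSq G : ℂ) * starRingEnd ℂ (u G) * v G) + l2inner (mulCoeff V u) v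

/-- The energy norm `‖u‖_a = √(a(u,u))`. -/
def aNorm (V u : Coeff d) : ℝ := Real.sqrt (aForm V u u).re

/-- The bounds `ν_* ≤ V ≤ ν^*` on the potential, encoded through the quadratic form
`(Vu, u)` of multiplication by `V`. -/
def PotentialBounds (V : Coeff d) (ν₁ ν₂ : ℝ) : Prop :=
  ∀ u, memHs 0 u →
    ν₁ * l2NormSq u ≤ (l2inner (mulCoeff V u) u).re ∧
      (l2inner (mulCoeff V u) u).re ≤ ν₂ * l2NormSq u

/-- `K : L_p² → H_p¹` is the solution operator: `a(Kw, v) = (w, v)` for all `v ∈ H_p¹`. -/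
def IsSolutionOp (V : Coeff d) (K : Coeff d → Coeff d) : Prop :=
  ∀ w, memHs 0 w →
    memHs 1 (K w) ∧ ∀ v, memHs 1 v → aForm V (K w) v = l2inner w v

/-- `P` is the Galerkin projection `P_𝔾 : H_p¹ → V_𝔾`:
`a(u − P_𝔾 u, v) = 0` for all `v ∈ V_𝔾`. -/
def IsGalerkin (V : Coeff d) (𝔾 : Set (Idx d)) (P : Coeff d → Coeff d) : Prop :=
  ∀ u, memHs 1 u →
    P u ∈ pwSpace 𝔾 ∧ memHs 1 (P u) ∧
      ∀ v ∈ pwSpace 𝔾, memHs 1 v → aForm V (u - P u) v = 0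

/-- `ρ_Ω(𝔾) = sup_{‖f‖_{L²}=1} inf_{v ∈ V_𝔾} ‖Kf − v‖_a`. -/
def rho (V : Coeff d) (K : Coeff d → Coeff d) (𝔾 : Set (Idx d)) : ℝ :=
  ⨆ f : {f : Coeff d // memHs 0 f ∧ l2Norm f = 1},
    ⨅ v : pwSpace 𝔾, aNorm V (K f.1 - v.1)

/-- `ν(𝔾) = sup_{f ∈ H_p¹, ‖f‖_a=1} inf_{v ∈ V_𝔾} ‖Kf − v‖_a`. -/
def nuG (V : Coeff d) (K : Coeff d → Coeff d) (𝔾 : Set (Idx d)) : ℝ :=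
  ⨆ f : {f : Coeff d // memHs 1 f ∧ aNorm V f = 1},
    ⨅ v : pwSpace 𝔾, aNorm V (K f.1 - v.1)

/-- The eigenspace `M(λ)` of the eigenvalue problem `a(u,v) = λ(u,v)`. -/
def eigenspace (V : Coeff d) (lam : ℝ) : Set (Coeff d) :=
  {u | memHs 1 u ∧ ∀ v, memHs 1 v → aForm V u v = (lam : ℂ) * l2inner u v}

/-- `δ_𝔾(λ) = sup_{w ∈ M(λ), ‖w‖_a=1} inf_{v ∈ V_𝔾} ‖w − v‖_a`. -/
def deltaG (V : Coeff d) (𝔾 : Set (Idx d)) (lam : ℝ) : ℝ :=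
  ⨆ w : {w : Coeff d // w ∈ eigenspace V lam ∧ aNorm V w = 1},
    ⨅ v : pwSpace 𝔾, aNorm V (w.1 - v.1)

/-- A discrete eigenpair of the planewave discretization in `V_𝔾`. -/
def IsDiscreteEigenpair (V : Coeff d) (𝔾 : Set (Idx d)) (lam : ℝ) (u : Coeff d) : Prop :=
  u ∈ pwSpace 𝔾 ∧ memHs 1 u ∧
    ∀ v ∈ pwSpace 𝔾, memHs 1 v → aForm V u v = (lam : ℂ) * l2inner u v

/-- The spectral projection `E_𝔾(λ) = (2πi)^{-1}∮_Γ (z − K_𝔾)^{-1} dz` associated with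
`K_𝔾` and the discrete invariant subspace `S = M_𝔾(λ)`, characterized algebraically:
a linear idempotent commuting with `K_𝔾` whose range is `S`. -/
def IsSpecProj (KG E : Coeff d → Coeff d) (S : Set (Coeff d)) : Prop :=
  (∀ u v, E (u + v) = E u + E v) ∧ (∀ (c : ℂ) (u), E (c • u) = c • E u) ∧
    (∀ u, E (E u) = E u) ∧ (∀ u, E u ∈ S) ∧ (∀ u ∈ S, E u = u) ∧
      ∀ u, E (KG u) = KG (E u)

/-- Residual of an approximate eigenpair: `r(w) = λw + Δw − Vw`. -/
def residual (V : Coeff d) (lam : ℝ) (w : Coeff d) : Coeff d :=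
  fun G => (lam : ℂ) * w G - (gnormSq G : ℂ) * w G - mulCoeff V w G

/-- Residual of the source problem: `r̄(w) = f − Lw = f + Δw − Vw`. -/
def rbar (V f w : Coeff d) : Coeff d :=
  fun G => f G - ((gnormSq G : ℂ) * w G + mulCoeff V w G)

/-- A posteriori estimator `η(r; 𝔾*) = ‖Π_{𝔾*} r‖_{H_p^{-1}}`. -/
def eta (𝔾s : Set (Idx d)) (r : Coeff d) : ℝ := hsNorm (-1) (proj 𝔾s r)

/-- Energy norm of an `N`-tuple. -/
def aNormT {N : ℕ} (V : Coeff d) (U : Fin N → Coeff d) : ℝ :=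
  Real.sqrt (∑ i, (aNorm V (U i)) ^ 2)

/-- The subspace distance `d_{H_p¹(Ω)}(X,Y) = sup_{u∈X,‖u‖_a=1} inf_{v∈Y} ‖u−v‖_a`. -/
def dSub (V : Coeff d) (X Y : Set (Coeff d)) : ℝ :=
  ⨆ u : {u : Coeff d // u ∈ X ∧ aNorm V u = 1}, ⨅ v : Y, aNorm V (u.1 - v.1)

/-- The symmetric subspace distance `δ_{H_p¹(Ω)}(X,Y)`. -/
def deltaSub (V : Coeff d) (X Y : Set (Coeff d)) : ℝ :=
  max (dSub V X Y) (dSub V Y X)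


/-! ### Absolute summability of the Fourier coefficients of the potential -/

lemma summable_prod_pi (p : ℤ → ℝ) (hp : ∀ z, 0 ≤ p z) (hs : Summable p) (n : ℕ) :
    Summable (fun G : Fin n → ℤ => ∏ i, p (G i)) := by
  induction n with
  | zero => exact Summable.of_finite
  | succ n ih =>
    rw [← (Fin.consEquiv (fun _ : Fin (n + 1) => ℤ)).summable_iff]
    have h := hs.mul_of_nonneg ih hp (fun G => Finset.prod_nonneg (fun i _ => hp _))
    refine h.congr (fun x => ?_)
    simp [Fin.prod_univ_succ, Fin.consEquiv]

lemma summable_int_weight (s : ℝ) (hs : 1 / 2 < s) :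
    Summable (fun z : ℤ => (1 + (z : ℝ) ^ 2) ^ (-s)) := by
  have h := Real.summable_abs_int_rpow (b := 2 * s) (by linarith)
  refine Summable.of_norm_bounded_eventually h ?_
  filter_upwards [(Set.finite_singleton (0 : ℤ)).compl_mem_cofinite] with z hz
  have hz' : (0 : ℝ) < |(z : ℝ)| := by simpa using hz
  rw [Real.norm_of_nonneg (by positivity)]
  have h2 : |(z : ℝ)| ^ (-(2 * s)) = ((z : ℝ) ^ 2) ^ (-s) := by
    rw [← sq_abs, ← Real.rpow_natCast, ← Real.rpow_mul hz'.le]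
    congr 1; push_cast; ring
  rw [h2]
  have hz2 : 0 < (z : ℝ) ^ 2 := by rw [← sq_abs]; positivity
  exact Real.rpow_le_rpow_of_nonpos hz2 (by linarith) (by linarith)

lemma gnormSq_nonneg (G : Idx d) : 0 ≤ gnormSq G := Finset.sum_nonneg (fun _ _ => sq_nonneg _)

lemma gnormSq_neg (G : Idx d) : gnormSq (-G) = gnormSq G := by simp [gnormSq]

/-- The weight `(1+|G|²)^{-σ}` is dominated by a product of one-dimensional weights with
exponent `σ/d > 1/2`. -/
lemma summable_weight (hd : 1 ≤ d) (σ : ℝ) (hσ : (d : ℝ) / 2 < σ) :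
    Summable (fun G : Idx d => (1 + gnormSq G) ^ (-σ)) := by
  have hd' : (0 : ℝ) < d := by exact_mod_cast hd
  have hs : 1 / 2 < σ / d := by rw [lt_div_iff₀ hd']; linarith
  have h := summable_prod_pi _ (fun z => by positivity) (summable_int_weight (σ / d) hs) d
  refine Summable.of_nonneg_of_le
    (fun G => Real.rpow_nonneg (by linarith [gnormSq_nonneg G]) _) (fun G => ?_) h
  have h1 : (1 + gnormSq G) ^ (-σ) = ∏ _i : Fin d, (1 + gnormSq G) ^ (-(σ / d)) := by
    rw [Finset.prod_const, Finset.card_univ, Fintype.card_fin, ← Real.rpow_natCast,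
      ← Real.rpow_mul (by linarith [gnormSq_nonneg G])]
    congr 1; field_simp
  rw [h1]
  refine Finset.prod_le_prod
    (fun i _ => Real.rpow_nonneg (by linarith [gnormSq_nonneg G]) _) (fun i _ => ?_)
  refine Real.rpow_le_rpow_of_nonpos (by positivity) ?_ (by linarith)
  have := Finset.single_le_sum (f := fun i => ((G i : ℝ)) ^ 2) (fun _ _ => sq_nonneg _)
    (Finset.mem_univ i)
  simpa [gnormSq] using this

/-- `H^σ ⊂ ℓ¹` on the Fourier side for `σ > d/2`, by Cauchy–Schwarz (here in the form of
Young's inequality `|ab| ≤ (a²+b²)/2`). -/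
lemma summable_norm_of_memHs (hd : 1 ≤ d) (σ : ℝ) (hσ : (d : ℝ) / 2 < σ) (V : Coeff d)
    (hV : memHs σ V) : Summable (fun G => ‖V G‖) := by
  refine Summable.of_nonneg_of_le (fun _ => norm_nonneg _) (fun G => ?_)
    ((summable_weight hd σ hσ).add hV.1)
  have h0 : 0 < 1 + gnormSq G := by linarith [gnormSq_nonneg G]
  have hw : 0 < (1 + gnormSq G) ^ σ := Real.rpow_pos_of_pos h0 _
  rw [Real.rpow_neg h0.le]
  set w := (1 + gnormSq G) ^ σ
  have h1 : w⁻¹ + w * ‖V G‖ ^ 2 - ‖V G‖ = w⁻¹ * ((1 - w * ‖V G‖) ^ 2 + w * ‖V G‖) := by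
    field_simp; ring
  have : 0 ≤ w⁻¹ * ((1 - w * ‖V G‖) ^ 2 + w * ‖V G‖) := by positivity
  linarith

/-! ### Multiplication by the potential on `ℓ²` -/

lemma summable_shift (V : Coeff d) (hV : Summable (fun G => ‖V G‖)) (G : Idx d) :
    Summable (fun G' => ‖V (G - G')‖) :=
  (Equiv.subLeft G).summable_iff.mpr hV

/-- The kernel `|V(G-G')| |u(G')|²` is summable over pairs. -/
lemma summable_kernel (V : Coeff d) (hV : Summable (fun G => ‖V G‖)) (u : Coeff d)
    (hu : Summable (fun G => ‖u G‖ ^ 2)) :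
    Summable (fun p : Idx d × Idx d => ‖V (p.1 - p.2)‖ * ‖u p.2‖ ^ 2) := by
  have h := hV.mul_of_nonneg hu (fun _ => norm_nonneg _) (fun _ => by positivity)
  let e : Idx d × Idx d ≃ Idx d × Idx d :=
    { toFun := fun p => (p.1 - p.2, p.2)
      invFun := fun p => (p.1 + p.2, p.2)
      left_inv := fun p => by simp
      right_inv := fun p => by simp }
  exact e.summable_iff.mpr h

lemma coeff_sub_symm (V : Coeff d) (hV : ∀ G, V (-G) = starRingEnd ℂ (V G)) (G G' : Idx d) :
    V (G - G') = starRingEnd ℂ (V (G' - G)) := by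
  rw [← hV, neg_sub]

lemma summable_row (V : Coeff d) (hV : Summable (fun G => ‖V G‖)) (u : Coeff d)
    (hu : Summable (fun G => ‖u G‖ ^ 2)) (G : Idx d) :
    Summable (fun G' => V (G - G') * u G') := by
  refine Summable.of_norm_bounded
    ((summable_shift V hV G).add ((summable_kernel V hV u hu).prod_factor G)) (fun G' => ?_)
  rw [norm_mul]
  nlinarith [mul_nonneg (norm_nonneg (V (G - G'))) (sq_nonneg (‖u G'‖ - 1)),
    mul_nonneg (norm_nonneg (V (G - G'))) (sq_nonneg (‖u G'‖))]

/-- The double series for `(Vu, v)` converges absolutely, since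
`|V(G-G')| |u(G')| |v(G)| ≤ |V(G-G')| (|u(G')|² + |v(G)|²)`. -/
lemma summable_double (V : Coeff d) (hV : Summable (fun G => ‖V G‖))
    (hVs : ∀ G, V (-G) = starRingEnd ℂ (V G)) (u v : Coeff d)
    (hu : Summable (fun G => ‖u G‖ ^ 2)) (hv : Summable (fun G => ‖v G‖ ^ 2)) :
    Summable (fun p : Idx d × Idx d =>
      starRingEnd ℂ (V (p.1 - p.2)) * starRingEnd ℂ (u p.2) * v p.1) := by
  refine Summable.of_norm_bounded
    ((summable_kernel V hV u hu).add (summable_kernel V hV v hv).prod_symm) (fun p => ?_)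
  have h1 : ‖V (p.2 - p.1)‖ = ‖V (p.1 - p.2)‖ := by
    rw [coeff_sub_symm V hVs p.2 p.1, RCLike.norm_conj]
  simp only [norm_mul, RCLike.norm_conj, Prod.fst_swap, Prod.snd_swap, h1]
  have := mul_nonneg (norm_nonneg (V (p.1 - p.2)))
    (by nlinarith [sq_nonneg (‖u p.2‖ - ‖v p.1‖), sq_nonneg (‖u p.2‖), sq_nonneg (‖v p.1‖)] :
      0 ≤ ‖u p.2‖ ^ 2 + ‖v p.1‖ ^ 2 - ‖u p.2‖ * ‖v p.1‖)
  linarith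

/-- Young's inequality `ℓ¹ * ℓ² ⊂ ℓ²`: multiplication by `V` preserves `ℓ²`. -/
lemma summable_mulCoeff_sq (V : Coeff d) (hV : Summable (fun G => ‖V G‖)) (u : Coeff d)
    (hu : Summable (fun G => ‖u G‖ ^ 2)) :
    Summable (fun G => ‖mulCoeff V u G‖ ^ 2) := by
  have hk := (summable_kernel V hV u hu).prod
  set c : ℝ := (Real.sqrt ((2 * Real.pi) ^ d))⁻¹ with hc
  set A : ℝ := ∑' G, ‖V G‖ with hA
  have hA0 : 0 ≤ A := tsum_nonneg (fun _ => norm_nonneg _)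
  refine Summable.of_nonneg_of_le (fun _ => by positivity) (fun G => ?_)
    (hk.mul_left (c ^ 2 * A))
  set B : ℝ := ∑' G', ‖V (G - G')‖ * ‖u G'‖ ^ 2 with hB
  have hB0 : 0 ≤ B := tsum_nonneg (fun _ => by positivity)
  have hAs : HasSum (fun G' => ‖V (G - G')‖) A := (Equiv.subLeft G).hasSum_iff.mpr hV.hasSum
  have hBs : HasSum (fun G' => ‖V (G - G')‖ * ‖u G'‖ ^ 2) B :=
    ((summable_kernel V hV u hu).prod_factor G).hasSum
  have hr := (summable_row V hV u hu G).norm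
  have key : ‖∑' G', V (G - G') * u G'‖ ^ 2 ≤ A * B := by
    have h1 : ‖∑' G', V (G - G') * u G'‖ ≤ ∑' G', ‖V (G - G') * u G'‖ := norm_tsum_le_tsum_norm hr
    set T : ℝ := ∑' G', ‖V (G - G') * u G'‖ with hT
    have hT0 : 0 ≤ T := tsum_nonneg (fun _ => norm_nonneg _)
    -- discriminant form of Cauchy–Schwarz: `t² A - 2 t T + B ≥ 0` for all `t`
    have hq : ∀ t : ℝ, 0 ≤ A * (t * t) + (-2 * T) * t + B := by
      intro t
      have hs := ((hAs.mul_left (t * t)).add (hr.hasSum.mul_left (-2 * t))).add hBs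
      have := hs.nonneg (fun G' => by
        rw [norm_mul]
        nlinarith [mul_nonneg (norm_nonneg (V (G - G'))) (sq_nonneg (‖u G'‖ - t))])
      rw [← hT] at this
      linarith
    have hdisc := discrim_le_zero hq
    unfold discrim at hdisc
    have : ‖∑' G', V (G - G') * u G'‖ ^ 2 ≤ T ^ 2 := by gcongr
    nlinarith
  have h2 : ‖mulCoeff V u G‖ = c * ‖∑' G', V (G - G') * u G'‖ := by
    unfold mulCoeff
    rw [norm_mul, Complex.norm_real, Real.norm_of_nonneg (by positivity)]
  rw [h2, mul_pow, mul_assoc]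
  gcongr

lemma mulCoeff_conj (V : Coeff d) (hVs : ∀ G, V (-G) = starRingEnd ℂ (V G)) (u : Coeff d)
    (hus : ∀ G, u (-G) = starRingEnd ℂ (u G)) (G : Idx d) :
    mulCoeff V u (-G) = starRingEnd ℂ (mulCoeff V u G) := by
  unfold mulCoeff
  rw [map_mul, Complex.conj_ofReal, Complex.conj_tsum, ← (Equiv.neg (Idx d)).tsum_eq]
  congr 1
  refine tsum_congr (fun G' => ?_)
  rw [map_mul, ← hVs, ← hus]
  congr 2
  simp only [Equiv.neg_apply]
  abel

lemma l2inner_mulCoeff_symm (V : Coeff d) (hV : Summable (fun G => ‖V G‖))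
    (hVs : ∀ G, V (-G) = starRingEnd ℂ (V G)) (u v : Coeff d)
    (hu : Summable (fun G => ‖u G‖ ^ 2)) (hv : Summable (fun G => ‖v G‖ ^ 2)) :
    l2inner (mulCoeff V u) v = starRingEnd ℂ (l2inner (mulCoeff V v) u) := by
  set c : ℝ := (Real.sqrt ((2 * Real.pi) ^ d))⁻¹ with hc
  have h1 : l2inner (mulCoeff V u) v =
      c * ∑' G, ∑' G', starRingEnd ℂ (V (G - G')) * starRingEnd ℂ (u G') * v G := by
    unfold l2inner mulCoeff
    rw [← tsum_mul_left]
    refine tsum_congr (fun G => ?_)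
    rw [map_mul, Complex.conj_ofReal, Complex.conj_tsum, mul_assoc, ← tsum_mul_right]
    simp only [map_mul, hc]
  have h2 : starRingEnd ℂ (l2inner (mulCoeff V v) u) =
      c * ∑' G', ∑' G, starRingEnd ℂ (V (G - G')) * starRingEnd ℂ (u G') * v G := by
    unfold l2inner mulCoeff
    rw [Complex.conj_tsum, ← tsum_mul_left]
    refine tsum_congr (fun G' => ?_)
    rw [map_mul, Complex.conj_conj, mul_assoc, ← tsum_mul_right]
    congr 1
    refine tsum_congr (fun G => ?_)
    rw [coeff_sub_symm V hVs G' G]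
    ring
  rw [h1, h2]
  congr 1
  exact (Summable.tsum_comm
    (f := fun G G' : Idx d => starRingEnd ℂ (V (G - G')) * starRingEnd ℂ (u G') * v G)
    (summable_double V hV hVs u v hu hv)).symm

/-! ### The duality between `H^{-1}` and `H^1` -/

/-- Finiteness of the `H_p^1` norm, without the reality condition. -/
def SumH1 (u : Coeff d) : Prop := Summable (fun G => (1 + gnormSq G) * ‖u G‖ ^ 2)

/-- Finiteness of the `H_p^{-1}` norm, without the reality condition. -/
def SumHm1 (r : Coeff d) : Prop := Summable (fun G => (1 + gnormSq G)⁻¹ * ‖r G‖ ^ 2)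

/-- The operator `Lu = -Δu + Vu` on Fourier coefficients. -/
def Lop (V u : Coeff d) : Coeff d := fun G => (gnormSq G : ℂ) * u G + mulCoeff V u G

lemma weight_pos (G : Idx d) : 0 < 1 + gnormSq G := by linarith [gnormSq_nonneg G]

lemma memHs_one_iff (u : Coeff d) :
    memHs 1 u ↔ SumH1 u ∧ ∀ G, u (-G) = starRingEnd ℂ (u G) := by
  simp only [memHs, SumH1, Real.rpow_one]

lemma memHs_zero_iff (u : Coeff d) :
    memHs 0 u ↔ Summable (fun G => ‖u G‖ ^ 2) ∧ ∀ G, u (-G) = starRingEnd ℂ (u G) := by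
  simp only [memHs, Real.rpow_zero, one_mul]

lemma SumH1.sq {u : Coeff d} (hu : SumH1 u) : Summable (fun G => ‖u G‖ ^ 2) :=
  Summable.of_nonneg_of_le (fun _ => by positivity)
    (fun G => le_mul_of_one_le_left (by positivity) (by linarith [gnormSq_nonneg G])) hu

lemma SumHm1.of_sq {u : Coeff d} (hu : Summable (fun G => ‖u G‖ ^ 2)) : SumHm1 u :=
  Summable.of_nonneg_of_le
    (fun G => mul_nonneg (inv_nonneg.mpr (weight_pos G).le) (by positivity))
    (fun G => mul_le_of_le_one_left (by positivity)
      (inv_le_one_of_one_le₀ (by linarith [gnormSq_nonneg G]))) hu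

lemma norm_sub_sq_le (a b : ℂ) : ‖a - b‖ ^ 2 ≤ 2 * ‖a‖ ^ 2 + 2 * ‖b‖ ^ 2 := by
  nlinarith [parallelogram_law_with_norm ℝ a b, sq_nonneg ‖a + b‖]

lemma SumH1.sub {u v : Coeff d} (hu : SumH1 u) (hv : SumH1 v) : SumH1 (u - v) := by
  refine Summable.of_nonneg_of_le
    (fun G => mul_nonneg (weight_pos G).le (by positivity)) (fun G => ?_)
    ((Summable.mul_left 2 hu).add (Summable.mul_left 2 hv))
  have := mul_le_mul_of_nonneg_left (norm_sub_sq_le (u G) (v G)) (weight_pos G).le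
  simp only [Pi.sub_apply]
  linarith

lemma SumHm1.sub {u v : Coeff d} (hu : SumHm1 u) (hv : SumHm1 v) : SumHm1 (u - v) := by
  refine Summable.of_nonneg_of_le
    (fun G => mul_nonneg (inv_nonneg.mpr (weight_pos G).le) (by positivity)) (fun G => ?_)
    ((Summable.mul_left 2 hu).add (Summable.mul_left 2 hv))
  have := mul_le_mul_of_nonneg_left (norm_sub_sq_le (u G) (v G))
    (inv_nonneg.mpr (weight_pos G).le)
  simp only [Pi.sub_apply]
  linarith

lemma memHs_one_sub {u v : Coeff d} (hu : memHs 1 u) (hv : memHs 1 v) : memHs 1 (u - v) := by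
  rw [memHs_one_iff] at *
  exact ⟨hu.1.sub hv.1, fun G => by simp [hu.2, hv.2]⟩

lemma memHs_one_smul {u : Coeff d} (t : ℝ) (hu : memHs 1 u) : memHs 1 ((t : ℂ) • u) := by
  rw [memHs_one_iff] at *
  refine ⟨(Summable.mul_left (t ^ 2) hu.1).congr (fun G => ?_), fun G => by simp [hu.2]⟩
  simp only [Pi.smul_apply, smul_eq_mul, norm_mul, mul_pow, Complex.norm_real, Real.norm_eq_abs,
    sq_abs]
  ring

lemma SumHm1.laplace {u : Coeff d} (hu : SumH1 u) :
    SumHm1 (fun G => (gnormSq G : ℂ) * u G) := by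
  refine Summable.of_nonneg_of_le
    (fun G => mul_nonneg (inv_nonneg.mpr (weight_pos G).le) (by positivity)) (fun G => ?_) hu
  have hg := gnormSq_nonneg G
  rw [norm_mul, Complex.norm_real, Real.norm_of_nonneg hg, mul_pow, ← mul_assoc]
  refine mul_le_mul_of_nonneg_right ?_ (by positivity)
  rw [inv_mul_le_iff₀ (weight_pos G)]
  nlinarith

lemma SumHm1.mulCoeff {V : Coeff d} (hV : Summable (fun G => ‖V G‖)) {u : Coeff d}
    (hu : SumH1 u) : SumHm1 (mulCoeff V u) :=
  SumHm1.of_sq (summable_mulCoeff_sq V hV u hu.sq)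

/-- Weighted Young inequality for the duality pairing. -/
lemma pairing_le (α : ℝ) (hα : 0 < α) (G : Idx d) (a b : ℂ) :
    ‖starRingEnd ℂ a * b‖ ≤
      (2 * α)⁻¹ * ((1 + gnormSq G)⁻¹ * ‖a‖ ^ 2) + α / 2 * ((1 + gnormSq G) * ‖b‖ ^ 2) := by
  have hw := weight_pos G
  set w := 1 + gnormSq G
  rw [norm_mul, RCLike.norm_conj]
  have h : (2 * α)⁻¹ * (w⁻¹ * ‖a‖ ^ 2) + α / 2 * (w * ‖b‖ ^ 2) - ‖a‖ * ‖b‖ =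
      (2 * α)⁻¹ * w⁻¹ * (‖a‖ - α * w * ‖b‖) ^ 2 := by
    field_simp; ring
  have : 0 ≤ (2 * α)⁻¹ * w⁻¹ * (‖a‖ - α * w * ‖b‖) ^ 2 := by positivity
  linarith

lemma summable_pairing {r v : Coeff d} (hr : SumHm1 r) (hv : SumH1 v) :
    Summable (fun G => starRingEnd ℂ (r G) * v G) :=
  Summable.of_norm_bounded
    ((Summable.mul_left ((2 * 1)⁻¹) hr).add (Summable.mul_left (1 / 2) hv))
    (fun G => pairing_le 1 one_pos G _ _)

lemma re_l2inner_le (α : ℝ) (hα : 0 < α) {r v : Coeff d} (hr : SumHm1 r) (hv : SumH1 v) :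
    (l2inner r v).re ≤ (2 * α)⁻¹ * (∑' G, (1 + gnormSq G)⁻¹ * ‖r G‖ ^ 2) +
      α / 2 * ∑' G, (1 + gnormSq G) * ‖v G‖ ^ 2 := by
  have hs := (Summable.hasSum hr).mul_left ((2 * α)⁻¹) |>.add
    ((Summable.hasSum hv).mul_left (α / 2))
  have hp := summable_pairing hr hv
  calc (l2inner r v).re ≤ ‖l2inner r v‖ := Complex.re_le_norm _
    _ ≤ ∑' G, ‖starRingEnd ℂ (r G) * v G‖ := norm_tsum_le_tsum_norm hp.norm
    _ ≤ _ := hasSum_le (fun G => pairing_le α hα G _ _) hp.norm.hasSum hs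

lemma l2inner_sub_left {r s v : Coeff d} (hr : SumHm1 r) (hs : SumHm1 s) (hv : SumH1 v) :
    l2inner (r - s) v = l2inner r v - l2inner s v := by
  unfold l2inner
  rw [← (summable_pairing hr hv).tsum_sub (summable_pairing hs hv)]
  exact tsum_congr (fun G => by simp [sub_mul])

lemma l2inner_sub_right {r u v : Coeff d} (hr : SumHm1 r) (hu : SumH1 u) (hv : SumH1 v) :
    l2inner r (u - v) = l2inner r u - l2inner r v := by
  unfold l2inner
  rw [← (summable_pairing hr hu).tsum_sub (summable_pairing hr hv)]
  exact tsum_congr (fun G => by simp [mul_sub])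

lemma l2inner_smul_right (r v : Coeff d) (t : ℂ) : l2inner r (t • v) = t * l2inner r v := by
  unfold l2inner
  rw [← tsum_mul_left]
  exact tsum_congr (fun G => by simp only [Pi.smul_apply, smul_eq_mul]; ring)

/-! ### The energy form -/

lemma SumHm1.Lop {V : Coeff d} (hV : Summable (fun G => ‖V G‖)) {u : Coeff d}
    (hu : SumH1 u) : SumHm1 (Lop V u) := by
  have hneg : SumHm1 (fun G => -APW.mulCoeff V u G) := by
    simpa only [SumHm1, norm_neg] using SumHm1.mulCoeff hV hu
  have h := (SumHm1.laplace hu).sub hneg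
  convert h using 1
  funext G
  simp [APW.Lop]

lemma aForm_eq {V : Coeff d} (hV : Summable (fun G => ‖V G‖)) {u v : Coeff d}
    (hu : SumH1 u) (hv : SumH1 v) : aForm V u v = l2inner (Lop V u) v := by
  have h1 := summable_pairing (SumHm1.laplace hu) hv
  have h2 := summable_pairing (SumHm1.mulCoeff hV hu) hv
  unfold aForm l2inner
  have h3 : (fun G => (gnormSq G : ℂ) * starRingEnd ℂ (u G) * v G) =
      fun G => starRingEnd ℂ ((gnormSq G : ℂ) * u G) * v G := by
    funext G; rw [map_mul, Complex.conj_ofReal]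
  rw [h3, ← h1.tsum_add h2]
  exact tsum_congr (fun G => by simp only [Lop, map_add, add_mul])

lemma aForm_symm {V : Coeff d} (hV : Summable (fun G => ‖V G‖))
    (hVs : ∀ G, V (-G) = starRingEnd ℂ (V G)) {u v : Coeff d} (hu : SumH1 u) (hv : SumH1 v) :
    aForm V u v = starRingEnd ℂ (aForm V v u) := by
  unfold aForm
  rw [map_add, ← l2inner_mulCoeff_symm V hV hVs u v hu.sq hv.sq, Complex.conj_tsum]
  congr 1
  refine tsum_congr (fun G => ?_)
  simp only [map_mul, Complex.conj_ofReal, Complex.conj_conj]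
  ring

lemma aForm_sub_right {V : Coeff d} (hV : Summable (fun G => ‖V G‖)) {u v w : Coeff d}
    (hu : SumH1 u) (hv : SumH1 v) (hw : SumH1 w) :
    aForm V u (v - w) = aForm V u v - aForm V u w := by
  rw [aForm_eq hV hu (hv.sub hw), aForm_eq hV hu hv, aForm_eq hV hu hw,
    l2inner_sub_right (SumHm1.Lop hV hu) hv hw]

lemma aForm_sub_left {V : Coeff d} (hV : Summable (fun G => ‖V G‖))
    (hVs : ∀ G, V (-G) = starRingEnd ℂ (V G)) {u v w : Coeff d}
    (hu : SumH1 u) (hv : SumH1 v) (hw : SumH1 w) :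
    aForm V (u - v) w = aForm V u w - aForm V v w := by
  rw [aForm_symm hV hVs (hu.sub hv) hw, aForm_sub_right hV hw hu hv, map_sub,
    ← aForm_symm hV hVs hu hw, ← aForm_symm hV hVs hv hw]

/-- Expansion of the energy of a difference. -/
lemma aForm_sub_self {V : Coeff d} (hV : Summable (fun G => ‖V G‖))
    (hVs : ∀ G, V (-G) = starRingEnd ℂ (V G)) {u v : Coeff d} (hu : SumH1 u) (hv : SumH1 v) :
    (aForm V (u - v) (u - v)).re =
      (aForm V u u).re - 2 * (aForm V u v).re + (aForm V v v).re := by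
  rw [aForm_sub_right hV (hu.sub hv) hu hv, aForm_sub_left hV hVs hu hv hu,
    aForm_sub_left hV hVs hu hv hv, aForm_symm hV hVs hv hu]
  simp only [Complex.sub_re, Complex.conj_re]
  ring

lemma aForm_smul_right {V : Coeff d} (hV : Summable (fun G => ‖V G‖)) {u v : Coeff d} (t : ℝ)
    (hu : memHs 1 u) (hv : memHs 1 v) : aForm V u ((t : ℂ) • v) = t * aForm V u v := by
  have hv' := memHs_one_smul t hv
  rw [memHs_one_iff] at hu hv hv'
  rw [aForm_eq hV hu.1 hv'.1, aForm_eq hV hu.1 hv.1, l2inner_smul_right]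

/-- Equivalence of the energy norm with the `H_p^1` norm, with constants
`α_* = min ν₁ 1` and `α^* = max ν₂ 1`. -/
lemma aForm_bounds {V : Coeff d} {ν₁ ν₂ : ℝ} (hVb : PotentialBounds V ν₁ ν₂) {u : Coeff d}
    (hu : memHs 1 u) :
    min ν₁ 1 * (∑' G, (1 + gnormSq G) * ‖u G‖ ^ 2) ≤ (aForm V u u).re ∧
      (aForm V u u).re ≤ max ν₂ 1 * ∑' G, (1 + gnormSq G) * ‖u G‖ ^ 2 := by
  rw [memHs_one_iff] at hu
  have hsq := hu.1.sq
  obtain ⟨hb1, hb2⟩ := hVb u ((memHs_zero_iff u).mpr ⟨hsq, hu.2⟩)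
  have hgs : Summable (fun G => gnormSq G * ‖u G‖ ^ 2) :=
    (Summable.sub hu.1 hsq).congr (fun G => by ring)
  have hsplit : ∑' G, (1 + gnormSq G) * ‖u G‖ ^ 2 =
      l2NormSq u + ∑' G, gnormSq G * ‖u G‖ ^ 2 := by
    unfold l2NormSq
    rw [← hsq.tsum_add hgs]
    exact tsum_congr (fun G => by ring)
  have hgrad : (∑' G, (gnormSq G : ℂ) * starRingEnd ℂ (u G) * u G) =
      ((∑' G, gnormSq G * ‖u G‖ ^ 2 : ℝ) : ℂ) := by
    rw [Complex.ofReal_tsum]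
    refine tsum_congr (fun G => ?_)
    rw [mul_assoc, ← Complex.normSq_eq_conj_mul_self, Complex.normSq_eq_norm_sq]
    push_cast; ring
  have hl0 : 0 ≤ l2NormSq u := tsum_nonneg (fun _ => by positivity)
  have hg0 : 0 ≤ ∑' G, gnormSq G * ‖u G‖ ^ 2 :=
    tsum_nonneg (fun G => mul_nonneg (gnormSq_nonneg G) (by positivity))
  unfold aForm
  rw [hgrad, hsplit, Complex.add_re, Complex.ofReal_re]
  constructor
  · nlinarith [mul_le_mul_of_nonneg_right (min_le_left ν₁ 1) hl0,
      mul_le_mul_of_nonneg_right (min_le_right ν₁ 1) hg0]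
  · nlinarith [mul_le_mul_of_nonneg_right (le_max_left ν₂ 1) hl0,
      mul_le_mul_of_nonneg_right (le_max_right ν₂ 1) hg0]

lemma aForm_self_nonneg {V : Coeff d} {ν₁ ν₂ : ℝ} (hν₁ : 0 < ν₁)
    (hVb : PotentialBounds V ν₁ ν₂) {u : Coeff d} (hu : memHs 1 u) : 0 ≤ (aForm V u u).re := by
  refine le_trans ?_ (aForm_bounds hVb hu).1
  exact mul_nonneg (le_min hν₁.le zero_le_one)
    (tsum_nonneg (fun G => mul_nonneg (weight_pos G).le (by positivity)))

/-! ### Residual estimates -/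

lemma eta_sq (S : Set (Idx d)) (r : Coeff d) :
    eta S r ^ 2 = ∑' G, (1 + gnormSq G)⁻¹ * ‖proj S r G‖ ^ 2 := by
  unfold eta hsNorm hsNormSq
  simp only [Real.rpow_neg_one]
  exact Real.sq_sqrt
    (tsum_nonneg (fun G => mul_nonneg (inv_nonneg.mpr (weight_pos G).le) (by positivity)))

lemma SumHm1.rbar {V : Coeff d} (hV : Summable (fun G => ‖V G‖)) {f w : Coeff d}
    (hf : memHs 0 f) (hw : memHs 1 w) : SumHm1 (rbar V f w) :=
  (SumHm1.of_sq ((memHs_zero_iff f).mp hf).1).sub (SumHm1.Lop hV ((memHs_one_iff w).mp hw).1)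

lemma l2inner_rbar {V : Coeff d} (hV : Summable (fun G => ‖V G‖)) {f w v : Coeff d}
    (hf : memHs 0 f) (hw : memHs 1 w) (hv : memHs 1 v) :
    l2inner (rbar V f w) v = l2inner f v - aForm V w v := by
  rw [memHs_one_iff] at hw hv
  rw [aForm_eq hV hw.1 hv.1, ← l2inner_sub_left (SumHm1.of_sq ((memHs_zero_iff f).mp hf).1)
    (SumHm1.Lop hV hw.1) hv.1]
  rfl

/-- Reliability: the energy error is controlled by the full estimator. -/
lemma reliability {V : Coeff d} (hV : Summable (fun G => ‖V G‖))
    (hVs : ∀ G, V (-G) = starRingEnd ℂ (V G)) {ν₁ ν₂ : ℝ} (hν₁ : 0 < ν₁)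
    (hVb : PotentialBounds V ν₁ ν₂) {f u w : Coeff d} (hf : memHs 0 f) (hu : memHs 1 u)
    (hw : memHs 1 w) (hsol : ∀ v, memHs 1 v → aForm V u v = l2inner f v) :
    min ν₁ 1 * (aForm V (u - w) (u - w)).re ≤ eta Set.univ (rbar V f w) ^ 2 := by
  have he := memHs_one_sub hu hw
  have hα : 0 < min ν₁ 1 := lt_min hν₁ one_pos
  have h1 : aForm V (u - w) (u - w) = l2inner (rbar V f w) (u - w) := by
    rw [l2inner_rbar hV hf hw he, ← hsol _ he]
    exact aForm_sub_left hV hVs ((memHs_one_iff u).mp hu).1 ((memHs_one_iff w).mp hw).1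
      ((memHs_one_iff _).mp he).1
  have h2 := re_l2inner_le (min ν₁ 1) hα (SumHm1.rbar hV hf hw) ((memHs_one_iff _).mp he).1
  have h3 := (aForm_bounds hVb he).1
  rw [← h1] at h2
  rw [eta_sq]
  simp only [proj, Set.mem_univ, if_true]
  set α := min ν₁ 1
  set η2 := ∑' G, (1 + gnormSq G)⁻¹ * ‖rbar V f w G‖ ^ 2
  set E := (aForm V (u - w) (u - w)).re
  have h4 : E ≤ (2 * α)⁻¹ * η2 + E / 2 := by linarith
  have h5 : α * E ≤ α * ((2 * α)⁻¹ * η2 + E / 2) := mul_le_mul_of_nonneg_left h4 hα.le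
  have h6 : α * ((2 * α)⁻¹ * η2 + E / 2) = η2 / 2 + α * E / 2 := by field_simp
  linarith

/-- The Riesz representative in `V_S` of the residual restricted to the frequencies in `S`. -/
def riesz (S : Set (Idx d)) (r : Coeff d) : Coeff d :=
  fun G => ((1 + gnormSq G)⁻¹ : ℝ) * proj S r G

lemma weight_riesz (S : Set (Idx d)) (r : Coeff d) (G : Idx d) :
    (1 + gnormSq G) * ‖riesz S r G‖ ^ 2 = (1 + gnormSq G)⁻¹ * ‖proj S r G‖ ^ 2 := by
  have hw := weight_pos G
  unfold riesz
  rw [norm_mul, Complex.norm_real, Real.norm_of_nonneg (inv_nonneg.mpr hw.le)]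
  field_simp

lemma memHs_riesz {S : Set (Idx d)} (hS : S = -S) {r : Coeff d} (hr : SumHm1 r)
    (hrs : ∀ G, r (-G) = starRingEnd ℂ (r G)) : memHs 1 (riesz S r) := by
  rw [memHs_one_iff]
  constructor
  · unfold SumH1
    simp only [weight_riesz]
    refine Summable.of_nonneg_of_le
      (fun G => mul_nonneg (inv_nonneg.mpr (weight_pos G).le) (by positivity)) (fun G => ?_) hr
    refine mul_le_mul_of_nonneg_left ?_ (inv_nonneg.mpr (weight_pos G).le)
    unfold proj
    split_ifs
    · exact le_rfl
    · simp
  · intro G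
    have hmem : -G ∈ S ↔ G ∈ S := by
      conv_lhs => rw [hS]
      simp
    simp only [riesz, proj, gnormSq_neg, hmem, hrs, map_mul, Complex.conj_ofReal]
    split_ifs <;> simp

lemma l2inner_riesz (S : Set (Idx d)) (r : Coeff d) :
    (l2inner r (riesz S r)).re = eta S r ^ 2 := by
  have : l2inner r (riesz S r) =
      ((∑' G, (1 + gnormSq G)⁻¹ * ‖proj S r G‖ ^ 2 : ℝ) : ℂ) := by
    rw [Complex.ofReal_tsum]
    refine tsum_congr (fun G => ?_)
    simp only [riesz, proj]
    split_ifs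
    · rw [mul_left_comm, ← Complex.normSq_eq_conj_mul_self, Complex.normSq_eq_norm_sq]
      push_cast; ring
    · simp
  rw [this, Complex.ofReal_re, eta_sq]

lemma rbar_conj {V : Coeff d} (hVs : ∀ G, V (-G) = starRingEnd ℂ (V G)) {f w : Coeff d}
    (hf : memHs 0 f) (hw : memHs 1 w) (G : Idx d) :
    rbar V f w (-G) = starRingEnd ℂ (rbar V f w G) := by
  simp only [rbar, gnormSq_neg, hf.2, hw.2, mulCoeff_conj V hVs w hw.2, map_sub, map_add,
    map_mul, Complex.conj_ofReal]

/-- Discrete efficiency: the estimator on the newly added frequencies is controlled by the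
energy of the increment of the Galerkin solution. This is `‖E - v/α^*‖_a² ≥ 0` for the
increment `E` and the Riesz representative `v` of the restricted residual. -/
lemma discrete_efficiency {V : Coeff d} (hV : Summable (fun G => ‖V G‖))
    (hVs : ∀ G, V (-G) = starRingEnd ℂ (V G)) {ν₁ ν₂ : ℝ} (hν₁ : 0 < ν₁)
    (hVb : PotentialBounds V ν₁ ν₂) {f w w' : Coeff d} (hf : memHs 0 f) (hw : memHs 1 w)
    (hw' : memHs 1 w') {S T : Set (Idx d)} (hS : S = -S) (hST : S ⊆ T)
    (hGal : ∀ v ∈ pwSpace T, memHs 1 v → aForm V w' v = l2inner f v) :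
    eta S (rbar V f w) ^ 2 ≤ max ν₂ 1 * (aForm V (w' - w) (w' - w)).re := by
  have hβ : 0 < max ν₂ 1 := lt_max_of_lt_right one_pos
  set r := rbar V f w with hr
  set v := riesz S r with hv
  have hvm : memHs 1 v := memHs_riesz hS (SumHm1.rbar hV hf hw) (rbar_conj hVs hf hw)
  have hvT : v ∈ pwSpace T := by
    intro G hG
    have : G ∉ S := fun h => hG (hST h)
    simp [hv, riesz, proj, this]
  have hE := memHs_one_sub hw' hw
  have h1 : (aForm V (w' - w) v).re = eta S r ^ 2 := by
    rw [aForm_sub_left hV hVs ((memHs_one_iff _).mp hw').1 ((memHs_one_iff _).mp hw).1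
      ((memHs_one_iff _).mp hvm).1, hGal v hvT hvm, ← l2inner_rbar hV hf hw hvm]
    exact l2inner_riesz S r
  have h2 : (aForm V v v).re ≤ max ν₂ 1 * eta S r ^ 2 := by
    have := (aForm_bounds hVb hvm).2
    simp only [hv, weight_riesz] at this
    rwa [eta_sq]
  set β := max ν₂ 1
  have htv := memHs_one_smul β⁻¹ hvm
  have h3 := aForm_self_nonneg hν₁ hVb (memHs_one_sub hE htv)
  rw [aForm_sub_self hV hVs ((memHs_one_iff _).mp hE).1 ((memHs_one_iff _).mp htv).1,
    aForm_smul_right hV β⁻¹ hE hvm, aForm_smul_right hV β⁻¹ htv hvm,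
    aForm_symm hV hVs ((memHs_one_iff _).mp htv).1 ((memHs_one_iff _).mp hvm).1,
    aForm_smul_right hV β⁻¹ hvm hvm] at h3
  simp only [Complex.re_ofReal_mul, map_mul, Complex.conj_ofReal, Complex.conj_re, h1] at h3
  set η2 := eta S r ^ 2
  set E := (aForm V (w' - w) (w' - w)).re
  have h4 : β⁻¹ * (β⁻¹ * (aForm V v v).re) ≤ β⁻¹ * η2 := by
    refine mul_le_mul_of_nonneg_left ?_ (inv_nonneg.mpr hβ.le)
    rwa [inv_mul_le_iff₀ hβ]
  have h5 : β⁻¹ * η2 ≤ E := by linarith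
  rwa [inv_mul_le_iff₀ hβ] at h5

/-- Galerkin orthogonality in Pythagorean form. -/
lemma pythagoras {V : Coeff d} (hV : Summable (fun G => ‖V G‖))
    (hVs : ∀ G, V (-G) = starRingEnd ℂ (V G)) {f u w w' : Coeff d} (hu : memHs 1 u)
    (hw : memHs 1 w) (hw' : memHs 1 w') {T : Set (Idx d)} (hwT : w ∈ pwSpace T)
    (hwT' : w' ∈ pwSpace T) (hsol : ∀ v, memHs 1 v → aForm V u v = l2inner f v)
    (hGal : ∀ v ∈ pwSpace T, memHs 1 v → aForm V w' v = l2inner f v) :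
    (aForm V (u - w) (u - w)).re =
      (aForm V (u - w') (u - w')).re + (aForm V (w' - w) (w' - w)).re := by
  have hm := memHs_one_sub hw hw'
  have hT : w - w' ∈ pwSpace T := fun G hG => by simp [hwT G hG, hwT' G hG]
  have h0 : aForm V (u - w') (w - w') = 0 := by
    rw [aForm_sub_left hV hVs ((memHs_one_iff _).mp hu).1 ((memHs_one_iff _).mp hw').1
      ((memHs_one_iff _).mp hm).1, hsol _ hm, hGal _ hT hm, sub_self]
  have h1 := aForm_sub_self hV hVs ((memHs_one_iff _).mp (memHs_one_sub hu hw')).1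
    ((memHs_one_iff _).mp hm).1
  rw [h0, sub_sub_sub_cancel_right] at h1
  have h2 := aForm_sub_self hV hVs ((memHs_one_iff _).mp hw').1 ((memHs_one_iff _).mp hw).1
  have h3 := aForm_sub_self hV hVs ((memHs_one_iff _).mp hw).1 ((memHs_one_iff _).mp hw').1
  rw [aForm_symm hV hVs ((memHs_one_iff _).mp hw).1 ((memHs_one_iff _).mp hw').1,
    Complex.conj_re] at h3
  rw [h1, h3, h2, Complex.zero_re]
  ring

lemma memHs_one_zero : memHs 1 (0 : Coeff d) := by
  rw [memHs_one_iff]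
  exact ⟨by simp [SumH1, summable_zero], fun G => by simp⟩

lemma aNormT_sq {N : ℕ} {V : Coeff d} {W : Fin N → Coeff d}
    (h : ∀ i, 0 ≤ (aForm V (W i) (W i)).re) :
    aNormT V W = Real.sqrt (∑ i, (aForm V (W i) (W i)).re) := by
  unfold aNormT aNorm
  congr 1
  exact Finset.sum_congr rfl (fun i _ => Real.sq_sqrt (h i))

/-- Theorem 2.4: the adaptive planewave algorithm for the source
system (Dörfler marking with parameter `θ`) contracts the energy error with rate
`ρ = √(1 − (α_*/α^*)θ²) ∈ (0,1)`. -/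
theorem statement3 (d N : ℕ) (hd : 1 ≤ d) (V : Coeff d) (σ ν₁ ν₂ : ℝ)
    (hσ : (d : ℝ) / 2 < σ) (hV : memHs σ V) (hν₁ : 0 < ν₁) (hν₁₂ : ν₁ ≤ ν₂)
    (hVb : PotentialBounds V ν₁ ν₂)
    (θ : ℝ) (hθ : θ ∈ Set.Ioo (0 : ℝ) 1)
    (f U : Fin N → Coeff d) (hf : ∀ i, memHs 0 (f i))
    (hU : ∀ i, memHs 1 (U i) ∧ ∀ v, memHs 1 v → aForm V (U i) v = l2inner (f i) v)
    (𝔾 δ𝔾 : ℕ → Set (Idx d)) (Us : ℕ → Fin N → Coeff d)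
    (h𝔾0 : 𝔾 0 = ∅) (hUs0 : Us 0 = 0)
    (hmark : ∀ n, δ𝔾 n ⊆ (𝔾 n)ᶜ ∧ δ𝔾 n = -(δ𝔾 n) ∧
      θ * Real.sqrt (∑ i, (eta Set.univ (rbar V (f i) (Us n i))) ^ 2) ≤
        Real.sqrt (∑ i, (eta (δ𝔾 n) (rbar V (f i) (Us n i))) ^ 2))
    (hstep : ∀ n, 𝔾 (n + 1) = 𝔾 n ∪ δ𝔾 n)
    (hGal : ∀ n i, Us (n + 1) i ∈ pwSpace (𝔾 (n + 1)) ∧ memHs 1 (Us (n + 1) i) ∧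
      ∀ v ∈ pwSpace (𝔾 (n + 1)), memHs 1 v →
        aForm V (Us (n + 1) i) v = l2inner (f i) v) :
    Real.sqrt (1 - min ν₁ 1 / max ν₂ 1 * θ ^ 2) ∈ Set.Ioo (0 : ℝ) 1 ∧
      ∀ n, aNormT V (U - Us (n + 1)) ≤
        Real.sqrt (1 - min ν₁ 1 / max ν₂ 1 * θ ^ 2) * aNormT V (U - Us n) := by
  have hVl := summable_norm_of_memHs hd σ hσ V hV
  have hVs := hV.2
  have hα : 0 < min ν₁ 1 := lt_min hν₁ one_pos
  have hβ : 0 < max ν₂ 1 := lt_max_of_lt_right one_pos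
  have hαβ : min ν₁ 1 ≤ max ν₂ 1 := (min_le_right _ _).trans (le_max_right _ _)
  obtain ⟨hθ0, hθ1⟩ := hθ
  have hq0 : 0 < min ν₁ 1 / max ν₂ 1 := div_pos hα hβ
  have hq1 : min ν₁ 1 / max ν₂ 1 ≤ 1 := (div_le_one hβ).mpr hαβ
  have hθ2 : θ ^ 2 < 1 := by nlinarith
  have hpos : 0 < 1 - min ν₁ 1 / max ν₂ 1 * θ ^ 2 := by nlinarith [sq_nonneg θ]
  refine ⟨⟨Real.sqrt_pos.mpr hpos, ?_⟩, fun n => ?_⟩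
  · rw [Real.sqrt_lt' one_pos]
    have : 0 < min ν₁ 1 / max ν₂ 1 * θ ^ 2 := by positivity
    linarith
  have hmem : ∀ n i, memHs 1 (Us n i) ∧ Us n i ∈ pwSpace (𝔾 n) := by
    intro n i
    cases n with
    | zero =>
      rw [hUs0]
      exact ⟨memHs_one_zero, fun G _ => rfl⟩
    | succ m => exact ⟨(hGal m i).2.1, (hGal m i).1⟩
  obtain ⟨-, hsymm, hdorfler⟩ := hmark n
  have hsub : δ𝔾 n ⊆ 𝔾 (n + 1) := by rw [hstep]; exact Set.subset_union_right
  have hsub' : 𝔾 n ⊆ 𝔾 (n + 1) := by rw [hstep]; exact Set.subset_union_left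
  have hnn : ∀ m i, 0 ≤ (aForm V ((U - Us m) i) ((U - Us m) i)).re := fun m i =>
    aForm_self_nonneg hν₁ hVb (memHs_one_sub (hU i).1 (hmem m i).1)
  rw [aNormT_sq (hnn (n + 1)), aNormT_sq (hnn n), ← Real.sqrt_mul hpos.le]
  refine Real.sqrt_le_sqrt ?_
  set e : Fin N → ℝ := fun i => (aForm V (U i - Us n i) (U i - Us n i)).re with he
  set E : Fin N → ℝ :=
    fun i => (aForm V (Us (n + 1) i - Us n i) (Us (n + 1) i - Us n i)).re with hE
  set A := ∑ i, eta Set.univ (rbar V (f i) (Us n i)) ^ 2 with hA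
  set B := ∑ i, eta (δ𝔾 n) (rbar V (f i) (Us n i)) ^ 2 with hB
  have hA0 : 0 ≤ A := Finset.sum_nonneg (fun _ _ => sq_nonneg _)
  have hB0 : 0 ≤ B := Finset.sum_nonneg (fun _ _ => sq_nonneg _)
  have hrel : min ν₁ 1 * ∑ i, e i ≤ A := by
    rw [Finset.mul_sum]
    exact Finset.sum_le_sum (fun i _ =>
      reliability hVl hVs hν₁ hVb (hf i) (hU i).1 (hmem n i).1 (hU i).2)
  have heff : B ≤ max ν₂ 1 * ∑ i, E i := by
    rw [Finset.mul_sum]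
    exact Finset.sum_le_sum (fun i _ =>
      discrete_efficiency hVl hVs hν₁ hVb (hf i) (hmem n i).1 (hGal n i).2.1 hsymm hsub
        (hGal n i).2.2)
  have hAB : θ ^ 2 * A ≤ B := by
    have := pow_le_pow_left₀ (by positivity) hdorfler 2
    rwa [mul_pow, Real.sq_sqrt hA0, Real.sq_sqrt hB0] at this
  have hpyth : ∑ i, (aForm V (U i - Us (n + 1) i) (U i - Us (n + 1) i)).re =
      ∑ i, e i - ∑ i, E i := by
    rw [← Finset.sum_sub_distrib]
    refine Finset.sum_congr rfl (fun i _ => ?_)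
    have := pythagoras hVl hVs (hU i).1 (hmem n i).1 (hGal n i).2.1
      (fun G hG => (hmem n i).2 G (fun h => hG (hsub' h))) (hGal n i).1 (hU i).2 (hGal n i).2.2
    simp only [he, hE]
    linarith
  have hfin : min ν₁ 1 / max ν₂ 1 * θ ^ 2 * ∑ i, e i ≤ ∑ i, E i := by
    rw [div_mul_eq_mul_div, div_mul_eq_mul_div, div_le_iff₀ hβ]
    nlinarith [mul_le_mul_of_nonneg_left hrel (sq_nonneg θ)]
  simp only [Pi.sub_apply]
  rw [hpyth]
  linarith

end APW
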